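/- Let U be a contractible open subset of ℂ and let X : U → Mat(2,ℂ) be a real analytic map such that X(z) ≠ 0 and det X(z) = 0 for all z ∈ U. Then there exists a real analytic map g : U → SL(2,ℂ) such that the matrix g(z) X(z) conj(g(z))ᵀ has identically vanishing second column on U. (The main step in the proof of Lemma 4.1, obtained by gluing local solutions via an upper-triangular cocycle.) -/

import Mathlib

open Matrix Complex

noncomputable section

/-
Since `adj X` is singular and nonzero with `X * adj X = 0`, the orthogonal projection onto its range
is a real analytic family `P z` of projections onto the kernel of `X z`. A homotopy contracting `U`
to a point joins `P` to a constant family. In steps so small that consecutive projections differ by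
less than `1` in norm, applying them one after another carries a fixed nonzero vector to a
continuous section `u` with `P u = u ≠ 0`. Normalised sums of steep Gaussians, centred at a locally
finite family of balls, are real analytic and approximate `u / ‖u‖` uniformly by some `w`, so that
`v = P w` is an analytic nowhere zero section of the kernel. If the second column of `gᴴ` is `v`,
the second column of `g X gᴴ` is `g (X v) = 0`, and such a `g` in `SL₂` exists by an explicit
formula.
-/

open Filter Function Metric Set Topology
open scoped BoundedContinuousFunction NNReal ENNReal

section PowerSeries

lemma hasFPowerSeriesOnBall_tsum {𝕜 E F ι : Type*} [NontriviallyNormedField 𝕜]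
    [NormedAddCommGroup E] [NormedSpace 𝕜 E] [NormedAddCommGroup F] [NormedSpace 𝕜 F]
    [CompleteSpace F] {f : ι → E → F} {p : ι → FormalMultilinearSeries 𝕜 E F} {x : E} {r : ℝ≥0}
    (hr : 0 < r) (hf : ∀ i, HasFPowerSeriesOnBall (f i) (p i) x r)
    (hp : Summable fun q : ι × ℕ ↦ ‖p q.1 q.2‖ * (r : ℝ) ^ q.2) :
    HasFPowerSeriesOnBall (fun y ↦ ∑' i, f i y) (fun n ↦ ∑' i, p i n) x r := by
  have hp_swap : Summable fun q : ℕ × ι ↦ ‖p q.2 q.1‖ * (r : ℝ) ^ q.1 := hp.prod_symm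
  have hp_coeff (n : ℕ) : Summable fun i ↦ ‖p i n‖ :=
    (summable_mul_right_iff (pow_pos (NNReal.coe_pos.2 hr) n).ne').1 (hp_swap.prod_factor n)
  refine ⟨FormalMultilinearSeries.le_radius_of_summable _ ?_, by exact_mod_cast hr, fun {y} hy ↦ ?_⟩
  · refine hp_swap.prod.of_nonneg_of_le (fun n ↦ by positivity) fun n ↦ ?_
    calc ‖∑' i, p i n‖ * (r : ℝ) ^ n
        ≤ (∑' i, ‖p i n‖) * (r : ℝ) ^ n := by gcongr; exact norm_tsum_le_tsum_norm (hp_coeff n)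
      _ = ∑' i, ‖p i n‖ * (r : ℝ) ^ n := tsum_mul_right.symm
  · have hy_norm : ‖y‖ ≤ r := by
      rw [mem_eball_zero_iff] at hy
      exact_mod_cast hy.le
    have hterm : Summable fun q : ι × ℕ ↦ p q.1 q.2 fun _ ↦ y :=
      hp.of_norm_bounded fun q ↦
        (p q.1 q.2).le_opNorm_mul_pow_of_le (pi_norm_const_le y |>.trans hy_norm)
    have hsum : HasSum (fun q : ι × ℕ ↦ p q.1 q.2 fun _ ↦ y) (∑' i, f i (x + y)) := by
      rw [tsum_congr fun i ↦ ((hf i).hasSum hy).tsum_eq.symm, ← hterm.tsum_prod]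
      exact hterm.hasSum
    refine ((Equiv.prodComm ℕ ι).hasSum_iff.2 hsum).prod_fiberwise fun n ↦ ?_
    exact ContinuousMultilinearMap.hasSum_eval (hp_coeff n).of_norm.hasSum fun _ ↦ y

lemma hasSum_pow_div_factorial_mul (a b r : ℝ) :
    HasSum (fun n : ℕ ↦ a ^ n / n.factorial * b * r ^ n) (Real.exp (a * r) * b) := by
  rw [Real.exp_eq_exp_ℝ]
  refine ((NormedSpace.expSeries_div_hasSum_exp (a * r)).mul_right b).congr_fun fun n ↦ ?_
  ring

variable {E F ι : Type*} [NormedAddCommGroup E] [NormedSpace ℝ E]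
  [NormedAddCommGroup F] [NormedSpace ℝ F]

/-- The power series at the origin of `x ↦ exp (ℓ x) • c`, where `ℓ` is a linear form. -/
def expSMulSeries (ℓ : E →L[ℝ] ℝ) (c : F) : FormalMultilinearSeries ℝ E F := fun n ↦
  ((ContinuousMultilinearMap.mkPiAlgebra ℝ (Fin n) ℝ).compContinuousLinearMap
    fun _ ↦ ℓ).smulRight ((n.factorial : ℝ)⁻¹ • c)

lemma norm_expSMulSeries_le (ℓ : E →L[ℝ] ℝ) (c : F) (n : ℕ) :
    ‖expSMulSeries ℓ c n‖ ≤ ‖ℓ‖ ^ n / n.factorial * ‖c‖ := by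
  have hpow : ‖(ContinuousMultilinearMap.mkPiAlgebra ℝ (Fin n) ℝ).compContinuousLinearMap
      fun _ ↦ ℓ‖ ≤ ‖ℓ‖ ^ n := by
    simpa using ContinuousMultilinearMap.norm_compContinuousLinearMap_le
      (ContinuousMultilinearMap.mkPiAlgebra ℝ (Fin n) ℝ) fun _ ↦ ℓ
  calc ‖expSMulSeries ℓ c n‖ ≤ ‖ℓ‖ ^ n * ‖(n.factorial : ℝ)⁻¹ • c‖ := by
        rw [expSMulSeries, ContinuousMultilinearMap.norm_smulRight]
        gcongr
    _ = ‖ℓ‖ ^ n / n.factorial * ‖c‖ := by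
        rw [norm_smul, norm_inv, Real.norm_natCast, div_eq_mul_inv, mul_assoc]

lemma hasFPowerSeriesOnBall_exp_smul (ℓ : E →L[ℝ] ℝ) (c : F) {r : ℝ≥0} (hr : 0 < r) :
    HasFPowerSeriesOnBall (fun x ↦ Real.exp (ℓ x) • c) (expSMulSeries ℓ c) 0 r := by
  refine ⟨FormalMultilinearSeries.le_radius_of_summable _ ?_, by exact_mod_cast hr, fun {y} _ ↦ ?_⟩
  · refine (hasSum_pow_div_factorial_mul ‖ℓ‖ ‖c‖ r).summable.of_nonneg_of_le
      (fun n ↦ by positivity) fun n ↦ ?_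
    gcongr
    exact norm_expSMulSeries_le ℓ c n
  · rw [zero_add, Real.exp_eq_exp_ℝ]
    convert (NormedSpace.expSeries_div_hasSum_exp (ℓ y)).smul_const c using 2 with n
    simp [expSMulSeries, smul_smul, div_eq_mul_inv]

lemma analyticAt_tsum_exp_smul [CompleteSpace F] (ℓ : ι → E →L[ℝ] ℝ) (c : ι → F)
    {r : ℝ≥0} (hr : 0 < r) (hs : Summable fun i ↦ Real.exp (‖ℓ i‖ * r) * ‖c i‖) :
    AnalyticAt ℝ (fun x ↦ ∑' i, Real.exp (ℓ i x) • c i) 0 := by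
  refine (hasFPowerSeriesOnBall_tsum hr
    (fun i ↦ hasFPowerSeriesOnBall_exp_smul (ℓ i) (c i) hr) ?_).analyticAt
  have hbound : Summable fun q : ι × ℕ ↦
      ‖ℓ q.1‖ ^ q.2 / q.2.factorial * ‖c q.1‖ * (r : ℝ) ^ q.2 := by
    rw [summable_prod_of_nonneg fun q ↦ by positivity]
    refine ⟨fun i ↦ (hasSum_pow_div_factorial_mul ‖ℓ i‖ ‖c i‖ r).summable, ?_⟩
    simpa only [(hasSum_pow_div_factorial_mul _ _ _).tsum_eq] using hs
  refine hbound.of_nonneg_of_le (fun q ↦ by positivity) fun q ↦ ?_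
  gcongr
  exact norm_expSMulSeries_le _ _ _

end PowerSeries

section Gaussian

variable {E F ι : Type*} [NormedAddCommGroup E] [NormedAddCommGroup F] [NormedSpace ℝ F]

/-- The function `z ↦ exp (M (r² - ‖z - p‖²))`, normalised to equal `1` on the sphere of radius `r`
around `p`. -/
def gaussianBump (M r : ℝ) (p z : E) : ℝ :=
  Real.exp (M * (r ^ 2 - ‖z - p‖ ^ 2))

lemma gaussianBump_pos (M r : ℝ) (p z : E) : 0 < gaussianBump M r p z :=
  Real.exp_pos _

lemma one_le_gaussianBump {M r : ℝ} (hM : 0 ≤ M) {p z : E} (hz : ‖z - p‖ ≤ r) :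
    1 ≤ gaussianBump M r p z :=
  Real.one_le_exp (mul_nonneg hM (sub_nonneg.2 (by gcongr)))

lemma gaussianBump_le {M r : ℝ} (hM : 0 ≤ M) (hr : 0 ≤ r) {p z : E} (hz : 2 * r ≤ ‖z - p‖) :
    gaussianBump M r p z ≤ Real.exp (-(M * r ^ 2)) := by
  have hsq : (2 * r) ^ 2 ≤ ‖z - p‖ ^ 2 := by gcongr
  refine Real.exp_le_exp.2 ?_
  rw [← mul_neg]
  gcongr
  nlinarith [sq_nonneg r]

variable [InnerProductSpace ℝ E]

/-- The linear form on `E × ℝ` that sends `(h, ‖h‖²)` to the increment of `-M ‖z - p‖²` between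
`z` and `z + h`, where `w = z - p`. -/
def gaussianExponent (M : ℝ) (w : E) : E × ℝ →L[ℝ] ℝ :=
  -M • (((2 : ℝ) • innerSL ℝ w).coprod (ContinuousLinearMap.id ℝ ℝ))

lemma gaussianExponent_apply (M : ℝ) (w h : E) :
    gaussianExponent M w (h, ‖h‖ ^ 2) = M * (‖w‖ ^ 2 - ‖w + h‖ ^ 2) := by
  simp only [gaussianExponent, _root_.smul_apply, ContinuousLinearMap.coprod_apply,
    innerSL_apply_apply, ContinuousLinearMap.id_apply, smul_eq_mul, norm_add_sq_real]
  ring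

lemma norm_gaussianExponent_le {M : ℝ} (hM : 0 ≤ M) (w : E) :
    ‖gaussianExponent M w‖ ≤ M * (2 * ‖w‖ + 1) := by
  refine ContinuousLinearMap.opNorm_le_bound _ (by positivity) fun y ↦ ?_
  have hw : ‖inner ℝ w y.1‖ ≤ ‖w‖ * ‖y‖ :=
    (norm_inner_le_norm w y.1).trans (by gcongr; exact norm_fst_le y)
  calc ‖gaussianExponent M w y‖ = M * ‖2 * inner ℝ w y.1 + y.2‖ := by
        simp [gaussianExponent, abs_of_nonneg hM]
    _ ≤ M * (2 * (‖w‖ * ‖y‖) + ‖y‖) := by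
        gcongr
        refine (norm_add_le _ _).trans (add_le_add ?_ (norm_snd_le y))
        rw [norm_mul, Real.norm_two]
        gcongr
    _ = M * (2 * ‖w‖ + 1) * ‖y‖ := by ring

lemma gaussianBump_add (M r : ℝ) (p z h : E) :
    gaussianBump M r p (z + h) =
      Real.exp (gaussianExponent M (z - p) (h, ‖h‖ ^ 2)) * gaussianBump M r p z := by
  rw [gaussianExponent_apply, gaussianBump, gaussianBump, ← Real.exp_add, sub_add_eq_add_sub]
  ring_nf

lemma analyticAt_tsum_gaussianBump_smul [CompleteSpace F] {M : ι → ℝ} (hM : ∀ i, 0 ≤ M i)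
    (r : ι → ℝ) (p : ι → E) (e : ι → F) (z : E) {ρ : ℝ≥0} (hρ : 0 < ρ)
    (hs : Summable fun i ↦
      Real.exp (M i * (2 * ‖z - p i‖ + 1) * ρ) * gaussianBump (M i) (r i) (p i) z * ‖e i‖) :
    AnalyticAt ℝ (fun x ↦ ∑' i, gaussianBump (M i) (r i) (p i) x • e i) z := by
  have hlin : AnalyticAt ℝ (fun y : E × ℝ ↦ ∑' i, Real.exp (gaussianExponent (M i) (z - p i) y) •
      gaussianBump (M i) (r i) (p i) z • e i) 0 := by
    refine analyticAt_tsum_exp_smul _ _ hρ (hs.of_nonneg_of_le (fun i ↦ by positivity) fun i ↦ ?_)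
    rw [norm_smul, Real.norm_of_nonneg (gaussianBump_pos _ _ _ _).le, ← mul_assoc]
    have := gaussianBump_pos (M i) (r i) (p i) z
    gcongr
    exact norm_gaussianExponent_le (hM i) _
  have hsub : AnalyticAt ℝ (fun x : E ↦ x - z) z := by fun_prop
  have hnorm : AnalyticAt ℝ (fun x : E ↦ ‖x - z‖ ^ 2) z :=
    AnalyticAt.comp (contDiff_norm_sq ℝ).contDiffAt.analyticAt hsub
  refine (hlin.comp_of_eq (hsub.prod hnorm) (by simp)).congr
    (.of_forall fun x ↦ tsum_congr fun i ↦ ?_)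
  rw [smul_smul, ← gaussianBump_add, add_sub_cancel]

end Gaussian

section BallCover

variable {E F : Type*} [NormedAddCommGroup E] [NormedAddCommGroup F] [NormedSpace ℝ F] {U : Set E}

lemma exists_cover_ball_locallyFinite_ball_two_mul.{u} {X : Type u} [MetricSpace X]
    [WeaklyLocallyCompactSpace X] [SigmaCompactSpace X] {N : X → Set X} (hN : ∀ x, N x ∈ 𝓝 x) :
    ∃ (ι : Type u) (c : ι → X) (r : ι → ℝ), (∀ i, 0 < r i) ∧
      (∀ i, ball (c i) (2 * r i) ⊆ N (c i)) ∧ ⋃ i, ball (c i) (r i) = univ ∧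
      LocallyFinite fun i ↦ ball (c i) (2 * r i) := by
  let K := CompactExhaustion.choice X
  -- With these neighbourhoods, a doubled ball can meet `K n` only if its center lies in `K n`.
  let W (x : X) : Set X := N x ∩ ⋂ n ∈ Iio (K.find x), (K n)ᶜ
  have hW (x : X) : W x ∈ 𝓝 x := by
    refine inter_mem (hN x) ((biInter_mem (finite_Iio _)).2 fun n hn ↦ ?_)
    exact (K.isCompact n).isClosed.isOpen_compl.mem_nhds fun hx ↦
      (K.mem_iff_find_le.1 hx).not_gt hn
  have hbasis (x : X) :
      (𝓝 x).HasBasis (fun r : ℝ ↦ 0 < r ∧ ball x (2 * r) ⊆ W x) (ball x) := by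
    refine nhds_basis_ball.restrict fun r hr ↦ ?_
    obtain ⟨t, ht, htW⟩ := Metric.mem_nhds_iff.1 (hW x)
    exact ⟨min r (t / 2), by positivity, (ball_subset_ball (by
      linarith [min_le_right r (t / 2)])).trans htW, ball_subset_ball (min_le_left _ _)⟩
  obtain ⟨ι, c, r, hr, hcover, hfin⟩ :=
    refinement_of_locallyCompact_sigmaCompact_of_nhds_basis hbasis
  refine ⟨ι, c, r, fun i ↦ (hr i).1, fun i ↦ (hr i).2.trans inter_subset_left, hcover, fun x ↦ ?_⟩
  refine ⟨K (K.find x + 1), mem_interior_iff_mem_nhds.1 (K.subset_interior_succ _ (K.mem_find x)),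
    (hfin.finite_nonempty_inter_compact (K.isCompact (K.find x + 1))).subset ?_⟩
  rintro i ⟨y, hyc, hyK⟩
  refine ⟨c i, mem_ball_self (hr i).1, ?_⟩
  by_contra hcK
  have hlt : K.find x + 1 < K.find (c i) := not_le.1 (mt K.mem_iff_find_le.2 hcK)
  exact mem_iInter₂.1 ((hr i).2 hyc).2 _ hlt hyK

/-- A cover of a metric space by balls whose doubles form a locally finite family, together with
summable tolerances attached to the balls. It indexes the sums of Gaussians by which continuous
functions are approximated. -/
structure BallCover.{u} (X : Type u) [MetricSpace X] where
  ι : Type u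
  center : ι → X
  radius : ι → ℝ
  tol : ι → ℝ
  radius_pos : ∀ i, 0 < radius i
  tol_pos : ∀ i, 0 < tol i
  summable_tol : Summable tol
  iUnion_ball : ⋃ i, ball (center i) (radius i) = univ
  locallyFinite_ball : LocallyFinite fun i ↦ ball (center i) (2 * radius i)

namespace BallCover

lemma exists_ball_subset_tsum_tol_le {X : Type*} [MetricSpace X] [WeaklyLocallyCompactSpace X]
    [SigmaCompactSpace X] {N : X → Set X} (hN : ∀ x, N x ∈ 𝓝 x) {δ : ℝ} (hδ : 0 < δ) :
    ∃ B : BallCover X, (∀ i, ball (B.center i) (2 * B.radius i) ⊆ N (B.center i)) ∧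
      ∑' i, B.tol i ≤ δ := by
  obtain ⟨ι, c, r, hr, hrN, hcover, hfin⟩ := exists_cover_ball_locallyFinite_ball_two_mul hN
  have hcount : Countable ι := countable_univ_iff.1 <| hfin.countable_univ fun i ↦
    ⟨c i, mem_ball_self (mul_pos two_pos (hr i))⟩
  obtain ⟨_⟩ := nonempty_encodable ι
  obtain ⟨tol, htol, S, hS, hSδ⟩ := posSumOfEncodable hδ ι
  exact ⟨⟨ι, c, r, tol, hr, htol, hS.summable, hcover, hfin⟩, hrN, hS.tsum_eq.trans_le hSδ⟩

lemma exists_dist_lt (B : BallCover U) (x : U) : ∃ i, dist x (B.center i) < B.radius i :=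
  mem_iUnion.1 (B.iUnion_ball.ge (mem_univ x))

lemma eventually_two_mul_radius_le (B : BallCover U) (x : U) :
    ∃ R > 0, ∀ᶠ i in cofinite,
      2 * B.radius i ≤ dist x (B.center i) ∧ R ≤ dist x (B.center i) := by
  obtain ⟨t, ht, hfin⟩ := B.locallyFinite_ball x
  obtain ⟨R, hR, hRt⟩ := Metric.mem_nhds_iff.1 ht
  refine ⟨R, hR, hfin.subset fun i hi ↦ ?_⟩
  rw [mem_compl_iff, mem_ofPred, not_and_or, not_le, not_le] at hi
  rcases hi with hx | hc
  · exact ⟨x, hx, mem_of_mem_nhds ht⟩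
  · exact ⟨B.center i, mem_ball_self (mul_pos two_pos (B.radius_pos i)), hRt (mem_ball'.2 hc)⟩

/-- The steepness that brings the Gaussian attached to the `i`-th ball below the tolerance outside
the doubled ball. -/
def steepness {X : Type*} [MetricSpace X] (B : BallCover X) (i : B.ι) : ℝ :=
  1 / (B.tol i * B.radius i ^ 2)

lemma steepness_nonneg {X : Type*} [MetricSpace X] (B : BallCover X) (i : B.ι) :
    0 ≤ B.steepness i := by
  have := B.tol_pos i
  have := B.radius_pos i
  unfold steepness
  positivity

lemma exp_neg_steepness_mul_sq_le_tol {X : Type*} [MetricSpace X] (B : BallCover X)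
    (i : B.ι) : Real.exp (-(B.steepness i * B.radius i ^ 2)) ≤ B.tol i := by
  have ht := B.tol_pos i
  have hr := B.radius_pos i
  rw [steepness, one_div_mul_eq_div, div_mul_cancel_right₀ (by positivity), Real.exp_neg]
  exact inv_le_of_inv_le₀ ht ((lt_add_one _).le.trans (Real.add_one_le_exp _))

/-- The Gaussian attached to the `i`-th ball of the cover. -/
def bump (B : BallCover U) (i : B.ι) (z : E) : ℝ :=
  gaussianBump (B.steepness i) (B.radius i) (B.center i : E) z

variable (B : BallCover U)

lemma bump_pos (i : B.ι) (z : E) : 0 < B.bump i z := gaussianBump_pos _ _ _ _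

lemma bump_le_tol {i : B.ι} {x : U} (h : 2 * B.radius i ≤ dist x (B.center i)) :
    B.bump i x ≤ B.tol i :=
  (gaussianBump_le (B.steepness_nonneg i) (B.radius_pos i).le
    (by rwa [← dist_eq_norm])).trans (B.exp_neg_steepness_mul_sq_le_tol i)

lemma one_le_bump {i : B.ι} {x : U} (h : dist x (B.center i) < B.radius i) :
    1 ≤ B.bump i x :=
  one_le_gaussianBump (B.steepness_nonneg i) (by rw [← dist_eq_norm]; exact h.le)

lemma summable_bump (x : U) : Summable fun i ↦ B.bump i x := by
  obtain ⟨R, -, hfar⟩ := B.eventually_two_mul_radius_le x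
  refine B.summable_tol.of_norm_bounded_eventually (hfar.mono fun i hi ↦ ?_)
  rw [Real.norm_of_nonneg (B.bump_pos i x).le]
  exact B.bump_le_tol hi.1

lemma one_le_tsum_bump (x : U) : 1 ≤ ∑' i, B.bump i x := by
  obtain ⟨i, hi⟩ := B.exists_dist_lt x
  exact (B.one_le_bump hi).trans
    ((B.summable_bump x).le_tsum i fun j _ ↦ (B.bump_pos j x).le)

lemma exp_mul_bump_le_tol {i : B.ι} {x : U} {R ρ : ℝ} (hR : 0 < R) (hρ : ρ ≤ R / 8)
    (hρ_sq : ρ ≤ R ^ 2 / 4) (hdist : R ≤ dist x (B.center i))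
    (hradius : 2 * B.radius i ≤ dist x (B.center i)) :
    Real.exp (B.steepness i * (2 * ‖(x : E) - B.center i‖ + 1) * ρ) * B.bump i x ≤ B.tol i := by
  have hr := B.radius_pos i
  rw [Subtype.dist_eq, dist_eq_norm] at hdist hradius
  set t : ℝ := ‖(x : E) - B.center i‖
  have hexponent : (2 * t + 1) * ρ + (B.radius i ^ 2 - t ^ 2) ≤ -B.radius i ^ 2 := by
    nlinarith
  refine le_trans ?_ (B.exp_neg_steepness_mul_sq_le_tol i)
  rw [bump, gaussianBump, ← Real.exp_add, mul_assoc, ← mul_add, ← mul_neg]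
  exact Real.exp_le_exp.2 (mul_le_mul_of_nonneg_left hexponent (B.steepness_nonneg i))

lemma norm_bump_smul_sub_le (f : U →ᵇ F) {i : B.ι} {ε : ℝ} (hε : 0 ≤ ε) (x : U)
    (hf : dist x (B.center i) < 2 * B.radius i → dist (f (B.center i)) (f x) ≤ ε) :
    ‖B.bump i x • (f (B.center i) - f x)‖ ≤ B.bump i x * ε + B.tol i * (2 * ‖f‖) := by
  have hbump := B.bump_pos i x
  have htol := B.tol_pos i
  rw [norm_smul, Real.norm_of_nonneg hbump.le, ← dist_eq_norm]
  rcases lt_or_ge (dist x (B.center i)) (2 * B.radius i) with hnear | hfar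
  · exact le_add_of_le_of_nonneg (by gcongr; exact hf hnear) (by positivity)
  · refine le_add_of_nonneg_of_le (by positivity) ?_
    gcongr
    exacts [B.bump_le_tol hfar, f.dist_le_two_norm _ _]

lemma norm_tsum_bump_smul_sub_le [CompleteSpace F] (f : U →ᵇ F) {ε : ℝ} (hε : 0 ≤ ε)
    (hf : ∀ i, ∀ x ∈ ball (B.center i) (2 * B.radius i), dist (f (B.center i)) (f x) ≤ ε) (x : U) :
    ‖(∑' i, B.bump i x)⁻¹ • ∑' i, B.bump i x • f (B.center i) - f x‖ ≤
      ε + (∑' i, B.tol i) * (2 * ‖f‖) := by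
  set S := ∑' i, B.bump i x
  have hS : 1 ≤ S := B.one_le_tsum_bump x
  have hS_pos : 0 < S := one_pos.trans_le hS
  have hsum := B.summable_bump x
  have hsum_f : Summable fun i ↦ B.bump i x • f (B.center i) :=
    (hsum.mul_right ‖f‖).of_norm_bounded fun i ↦ by
      rw [norm_smul, Real.norm_of_nonneg (B.bump_pos i x).le]
      exact mul_le_mul_of_nonneg_left (f.norm_coe_le_norm _) (B.bump_pos i x).le
  have hdiff : S⁻¹ • ∑' i, B.bump i x • f (B.center i) - f x =
      S⁻¹ • ∑' i, B.bump i x • (f (B.center i) - f x) := by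
    simp_rw [smul_sub]
    rw [hsum_f.tsum_sub (hsum.smul_const _), hsum.tsum_smul_const, smul_sub,
      inv_smul_smul₀ hS_pos.ne']
  have hbound : ‖∑' i, B.bump i x • (f (B.center i) - f x)‖ ≤
      S * ε + (∑' i, B.tol i) * (2 * ‖f‖) :=
    tsum_of_norm_bounded ((hsum.hasSum.mul_right ε).add (B.summable_tol.hasSum.mul_right _))
      fun i ↦ B.norm_bump_smul_sub_le f hε x (hf i x)
  have htol : 0 ≤ (∑' i, B.tol i) * (2 * ‖f‖) :=
    mul_nonneg (tsum_nonneg fun i ↦ (B.tol_pos i).le) (by positivity)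
  rw [hdiff, norm_smul, norm_inv, Real.norm_of_nonneg hS_pos.le, inv_mul_le_iff₀ hS_pos, mul_add]
  exact hbound.trans (add_le_add_right (le_mul_of_one_le_left htol hS) _)

variable [InnerProductSpace ℝ E] [CompleteSpace F]

lemma analyticOnNhd_tsum_bump_smul {e : B.ι → F} {C : ℝ}
    (he : ∀ i, ‖e i‖ ≤ C) : AnalyticOnNhd ℝ (fun z ↦ ∑' i, B.bump i z • e i) U := by
  intro z hz
  obtain ⟨R, hR, hfar⟩ := B.eventually_two_mul_radius_le ⟨z, hz⟩
  let ρ : ℝ := min (R / 8) (R ^ 2 / 4)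
  have hρ : 0 < ρ := by positivity
  refine analyticAt_tsum_gaussianBump_smul B.steepness_nonneg _ _ _ _
    (Real.toNNReal_pos.2 hρ) ((B.summable_tol.mul_right C).of_norm_bounded_eventually ?_)
  filter_upwards [hfar] with i hi
  rw [Real.coe_toNNReal _ hρ.le, norm_mul, norm_norm, Real.norm_of_nonneg
    (mul_pos (Real.exp_pos _) (gaussianBump_pos _ _ _ _)).le]
  exact mul_le_mul (B.exp_mul_bump_le_tol hR (min_le_left _ _) (min_le_right _ _) hi.2 hi.1)
    (he i) (norm_nonneg _) (B.tol_pos i).le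

end BallCover

theorem exists_analyticOnNhd_norm_sub_lt [InnerProductSpace ℝ E] [FiniteDimensional ℝ E]
    [CompleteSpace F] (hU : IsOpen U) (f : U →ᵇ F) {ε : ℝ} (hε : 0 < ε) :
    ∃ g : E → F, AnalyticOnNhd ℝ g U ∧ ∀ x : U, ‖g x - f x‖ < ε := by
  have := FiniteDimensional.proper_real E
  have := hU.locallyCompactSpace
  have hnear (x : U) : f ⁻¹' ball (f x) (ε / 3) ∈ 𝓝 x :=
    f.continuous.continuousAt (ball_mem_nhds _ (by positivity))
  obtain ⟨B, hB, htol⟩ := BallCover.exists_ball_subset_tsum_tol_le hnear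
    (show 0 < ε / (6 * (‖f‖ + 1)) by positivity)
  refine ⟨fun z ↦ (∑' i, B.bump i z • (1 : ℝ))⁻¹ • ∑' i, B.bump i z • f (B.center i),
    fun z hz ↦ ?_, fun x ↦ ?_⟩
  · refine ((B.analyticOnNhd_tsum_bump_smul fun _ ↦ norm_one.le) z hz).inv ?_ |>.smul
      ((B.analyticOnNhd_tsum_bump_smul fun i ↦ f.norm_coe_le_norm _) z hz)
    simpa only [smul_eq_mul, mul_one] using (one_pos.trans_le (B.one_le_tsum_bump ⟨z, hz⟩)).ne'
  · simp only [smul_eq_mul, mul_one]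
    calc _ ≤ ε / 3 + (∑' i, B.tol i) * (2 * ‖f‖) :=
          B.norm_tsum_bump_smul_sub_le f (by positivity) (fun i y hy ↦ (mem_ball'.1 (hB i hy)).le) x
      _ ≤ ε / 3 + ε / (6 * (‖f‖ + 1)) * (2 * (‖f‖ + 1)) := by gcongr; linarith
      _ < ε := by field_simp; norm_num

end BallCover

section Transport

open scoped unitInterval

lemma exists_continuous_pos_forall_dist_lt {X K M : Type*} [TopologicalSpace X] [NormalSpace X]
    [ParacompactSpace X] [PseudoMetricSpace K] [CompactSpace K] [PseudoMetricSpace M]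
    (Γ : C(X × K, M)) {ε : ℝ} (hε : 0 < ε) :
    ∃ δ : C(X, ℝ), ∀ x, 0 < δ x ∧ ∀ t t', dist t t' ≤ δ x → dist (Γ (x, t)) (Γ (x, t')) < ε := by
  let T (x : X) : Set ℝ := {δ | 0 < δ ∧ ∀ t t', dist t t' ≤ δ → dist (Γ (x, t)) (Γ (x, t')) < ε}
  have hT (x : X) : Convex ℝ (T x) := by
    refine OrdConnected.convex ⟨fun a ha b hb c hc ↦ ⟨ha.1.trans_le hc.1, fun t t' h ↦ ?_⟩⟩
    exact hb.2 t t' (h.trans hc.2)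
  refine exists_continuous_forall_mem_convex_of_local_const hT fun x ↦ ?_
  obtain ⟨δ, hδ, hunif⟩ := Metric.uniformContinuous_iff.1
    (CompactSpace.uniformContinuous_of_continuous (Γ.curry x).continuous) (ε / 3) (by positivity)
  refine ⟨δ / 2, ?_⟩
  filter_upwards [Γ.curry.continuous.continuousAt (ball_mem_nhds _ (show 0 < ε / 3 by positivity))]
    with y hy
  have hclose (t : K) : dist (Γ (y, t)) (Γ (x, t)) < ε / 3 :=
    (ContinuousMap.dist_apply_le_dist t).trans_lt hy
  refine ⟨half_pos hδ, fun t t' ht ↦ ?_⟩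
  have hmid : dist (Γ (x, t)) (Γ (x, t')) < ε / 3 := hunif (ht.trans_lt (half_lt_self hδ))
  have htri := dist_triangle4_right (Γ (y, t)) (Γ (y, t')) (Γ (x, t)) (Γ (x, t'))
  linarith [hclose t, hclose t']

variable {𝕜 X F : Type*} [NontriviallyNormedField 𝕜] [NormedAddCommGroup F] [NormedSpace 𝕜 F]

lemma apply_ne_zero_of_norm_sub_lt_one {P Q : F →L[𝕜] F} {v : F} (hv : P v = v) (hv0 : v ≠ 0)
    (h : ‖Q - P‖ < 1) : Q v ≠ 0 := by
  intro hQ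
  have hle : ‖v‖ ≤ ‖Q - P‖ * ‖v‖ := by
    simpa [hQ, hv] using (Q - P).le_opNorm v
  exact hle.not_gt (mul_lt_of_lt_one_left (norm_pos_iff.2 hv0) h)

/-- Moves a vector along a sequence of operators `A 0, A 1, …`, applying `A 1, …, A k` in turn.
For nearby projections this is a discrete parallel transport of a vector in the range of `A 0`. -/
def transport (A : ℕ → F →L[𝕜] F) (v : F) : ℕ → F
  | 0 => v
  | k + 1 => A (k + 1) (transport A v k)

lemma apply_transport {A : ℕ → F →L[𝕜] F} (hA : ∀ k, IsIdempotentElem (A k)) {v : F}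
    (hv : A 0 v = v) : ∀ k, A k (transport A v k) = transport A v k
  | 0 => hv
  | k + 1 => DFunLike.congr_fun (hA (k + 1)) _

lemma transport_ne_zero {A : ℕ → F →L[𝕜] F} (hA : ∀ k, IsIdempotentElem (A k)) {v : F}
    (hv : A 0 v = v) (hv0 : v ≠ 0) (hclose : ∀ k, ‖A (k + 1) - A k‖ < 1) :
    ∀ k, transport A v k ≠ 0
  | 0 => hv0
  | k + 1 => apply_ne_zero_of_norm_sub_lt_one (apply_transport hA hv k)
      (transport_ne_zero hA hv hv0 hclose k) (hclose k)

lemma transport_eq_of_le {A : ℕ → F →L[𝕜] F} {B : F →L[𝕜] F} (hA : ∀ k, IsIdempotentElem (A k))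
    {v : F} (hv : A 0 v = v) {m n : ℕ} (hB : ∀ k, m ≤ k → A k = B) (hmn : m ≤ n) :
    transport A v n = transport A v m := by
  induction n, hmn using Nat.le_induction with
  | base => rfl
  | succ k hk ih =>
    rw [transport, ih, hB _ (hk.trans k.le_succ), ← hB m le_rfl, apply_transport hA hv]

lemma continuous_transport [TopologicalSpace X] {A : X → ℕ → F →L[𝕜] F} {v : X → F}
    (hA : ∀ k, Continuous fun x ↦ A x k) (hv : Continuous v) :
    ∀ k, Continuous fun x ↦ transport (A x) (v x) k
  | 0 => hv
  | k + 1 => (hA (k + 1)).clm_apply (continuous_transport hA hv k)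

theorem exists_continuous_fixed_ne_zero_of_eventually_eq [TopologicalSpace X]
    {A : X → ℕ → F →L[𝕜] F} {B : X → F →L[𝕜] F} (hA : ∀ x k, IsIdempotentElem (A x k))
    (hA_cont : ∀ k, Continuous fun x ↦ A x k) (hA_close : ∀ x k, ‖A x (k + 1) - A x k‖ < 1)
    (hB : ∀ x, ∃ n, ∀ᶠ y in 𝓝 x, ∀ k, n ≤ k → A y k = B y) (s : C(X, F))
    (hs : ∀ x, A x 0 (s x) = s x ∧ s x ≠ 0) :
    ∃ s' : C(X, F), ∀ x, B x (s' x) = s' x ∧ s' x ≠ 0 := by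
  choose N hN using hB
  have hN_self (x : X) : ∀ k, N x ≤ k → A x k = B x := (hN x).self_of_nhds
  refine ⟨⟨fun x ↦ transport (A x) (s x) (N x), continuous_iff_continuousAt.2 fun x ↦ ?_⟩,
    fun x ↦ ⟨?_, transport_ne_zero (hA x) (hs x).1 (hs x).2 (hA_close x) _⟩⟩
  · refine (continuous_transport hA_cont s.continuous (N x)).continuousAt.congr ?_
    filter_upwards [hN x] with y hy
    rw [← transport_eq_of_le (hA y) (hs y).1 hy (le_max_left (N x) (N y)),
      ← transport_eq_of_le (hA y) (hs y).1 (hN_self y) (le_max_right (N x) (N y))]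
  · rw [← hN_self x _ le_rfl]
    exact apply_transport (hA x) (hs x).1 (N x)

variable [TopologicalSpace X] [NormalSpace X] [ParacompactSpace X]

theorem exists_continuous_fixed_ne_zero_of_homotopy (P : C(X × I, F →L[𝕜] F))
    (hP : ∀ p, IsIdempotentElem (P p)) (s : C(X, F))
    (hs : ∀ x, P (x, 0) (s x) = s x ∧ s x ≠ 0) :
    ∃ s' : C(X, F), ∀ x, P (x, 1) (s' x) = s' x ∧ s' x ≠ 0 := by
  obtain ⟨δ, hδ⟩ := exists_continuous_pos_forall_dist_lt P one_pos
  let τ (x : X) (k : ℕ) : I := projIcc 0 1 zero_le_one (k * δ x)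
  have hτ_one (x : X) : ∃ n : ℕ, ∀ᶠ y in 𝓝 x, ∀ k : ℕ, n ≤ k → τ y k = 1 := by
    obtain ⟨n, hn⟩ := exists_nat_gt (1 / δ x)
    have hlt : 1 < n * δ x := (div_lt_iff₀ (hδ x).1).1 hn
    refine ⟨n, ?_⟩
    filter_upwards [(δ.continuous.const_mul (n : ℝ)).continuousAt.eventually_const_lt hlt]
      with y hy k hk
    refine projIcc_of_right_le zero_le_one (hy.le.trans ?_)
    gcongr
    exact (hδ y).1.le
  have hτ_close (x : X) (k : ℕ) : dist (τ x (k + 1)) (τ x k) ≤ δ x := by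
    refine (abs_projIcc_sub_projIcc _).trans_eq ?_
    rw [Nat.cast_succ, add_one_mul, add_sub_cancel_left, abs_of_pos (hδ x).1]
  refine exists_continuous_fixed_ne_zero_of_eventually_eq (A := fun x k ↦ P (x, τ x k))
    (fun _ _ ↦ hP _) (fun k ↦ P.continuous.comp ?_) (fun x k ↦ ?_) (fun x ↦ ?_) s fun x ↦ ?_
  · exact continuous_id.prodMk (continuous_projIcc.comp (by fun_prop))
  · rw [← dist_eq_norm]
    exact (hδ x).2 _ _ (hτ_close x k)
  · obtain ⟨n, hn⟩ := hτ_one x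
    exact ⟨n, hn.mono fun y hy k hk ↦ by rw [hy k hk]⟩
  · have hτ_zero : τ x 0 = 0 := projIcc_of_le_left zero_le_one (by simp)
    rw [hτ_zero]
    exact hs x

theorem exists_continuous_fixed_ne_zero [ContractibleSpace X]
    (P : C(X, F →L[𝕜] F)) (hP : ∀ x, IsIdempotentElem (P x)) (hP0 : ∀ x, P x ≠ 0) :
    ∃ s : C(X, F), ∀ x, P x (s x) = s x ∧ s x ≠ 0 := by
  obtain ⟨x₀, ⟨h⟩⟩ := id_nullhomotopic X
  obtain ⟨v, hv⟩ := DFunLike.ne_iff.1 (hP0 x₀)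
  obtain ⟨s, hs⟩ := exists_continuous_fixed_ne_zero_of_homotopy
    (P.comp (h.symm.toContinuousMap.comp .prodSwap)) (fun _ ↦ hP _) (.const X (P x₀ v))
    fun x ↦ ⟨by simpa using DFunLike.congr_fun (hP x₀) v, by simpa using hv⟩
  exact ⟨s, by simpa using hs⟩

theorem exists_boundedContinuousFunction_fixed_norm_eq_one {F : Type*} [NormedAddCommGroup F]
    [NormedSpace ℝ F] [ContractibleSpace X] (P : C(X, F →L[ℝ] F))
    (hP : ∀ x, IsIdempotentElem (P x)) (hP0 : ∀ x, P x ≠ 0) :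
    ∃ u : X →ᵇ F, ∀ x, P x (u x) = u x ∧ ‖u x‖ = 1 := by
  obtain ⟨s, hs⟩ := exists_continuous_fixed_ne_zero P hP hP0
  have hs_norm (x : X) : ‖s x‖ ≠ 0 := norm_ne_zero_iff.2 (hs x).2
  have hu_norm (x : X) : ‖‖s x‖⁻¹ • s x‖ = 1 := by
    rw [norm_smul, norm_inv, norm_norm, inv_mul_cancel₀ (hs_norm x)]
  refine ⟨.ofNormedAddCommGroup (fun x ↦ ‖s x‖⁻¹ • s x)
    ((s.continuous.norm.inv₀ hs_norm).smul s.continuous) 1 fun x ↦ (hu_norm x).le,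
    fun x ↦ ⟨?_, hu_norm x⟩⟩
  rw [BoundedContinuousFunction.coe_ofNormedAddCommGroup, map_smul, (hs x).1]

end Transport

theorem exists_analyticOnNhd_fixed_ne_zero {E F : Type*} [NormedAddCommGroup E]
    [InnerProductSpace ℝ E] [FiniteDimensional ℝ E] [NormedAddCommGroup F] [NormedSpace ℝ F]
    [CompleteSpace F] {U : Set E} (hU : IsOpen U) [ContractibleSpace U] {P : E → F →L[ℝ] F} {C : ℝ}
    (hP_an : AnalyticOnNhd ℝ P U) (hP : ∀ z ∈ U, IsIdempotentElem (P z)) (hP0 : ∀ z ∈ U, P z ≠ 0)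
    (hPC : ∀ z ∈ U, ‖P z‖ ≤ C) :
    ∃ v : E → F, AnalyticOnNhd ℝ v U ∧ ∀ z ∈ U, P z (v z) = v z ∧ v z ≠ 0 := by
  obtain ⟨u, hu⟩ := exists_boundedContinuousFunction_fixed_norm_eq_one
    ⟨U.domRestrict P, hP_an.continuousOn.domRestrict⟩ (fun x ↦ hP x x.2) fun x ↦ hP0 x x.2
  obtain ⟨w, hw_an, hw⟩ := exists_analyticOnNhd_norm_sub_lt hU u
    (show 0 < 1 / (|C| + 1) by positivity)
  refine ⟨fun z ↦ P z (w z), fun z hz ↦ ?_,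
    fun z hz ↦ ⟨DFunLike.congr_fun (hP z hz) (w z), fun (hzero : P z (w z) = 0) ↦ ?_⟩⟩
  · exact ((ContinuousLinearMap.id ℝ (F →L[ℝ] F)).analyticAt_bilinear (P z, w z)).comp₂
      (hP_an z hz) (hw_an z hz)
  obtain ⟨hu_fixed, hu_norm⟩ : P z (u ⟨z, hz⟩) = u ⟨z, hz⟩ ∧ ‖u ⟨z, hz⟩‖ = 1 := hu ⟨z, hz⟩
  have hlt : ‖P z (w z - u ⟨z, hz⟩)‖ < 1 :=
    calc ‖P z (w z - u ⟨z, hz⟩)‖ ≤ ‖P z‖ * ‖w z - u ⟨z, hz⟩‖ := (P z).le_opNorm _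
      _ ≤ (|C| + 1) * ‖w z - u ⟨z, hz⟩‖ := by
        gcongr
        linarith [hPC z hz, le_abs_self C]
      _ < (|C| + 1) * (1 / (|C| + 1)) := by gcongr; exact hw ⟨z, hz⟩
      _ = 1 := mul_one_div_cancel (by positivity)
  rw [map_sub, hzero, hu_fixed, zero_sub, norm_neg, hu_norm] at hlt
  exact hlt.false

section Matrix

open scoped ComplexOrder

lemma mul_self_eq_trace_smul_of_det_eq_zero {R : Type*} [CommRing R] [Nontrivial R]
    {A : Matrix (Fin 2) (Fin 2) R} (hA : A.det = 0) : A * A = A.trace • A := by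
  have hcayley := A.aeval_self_charpoly
  rw [charpoly_fin_two, hA] at hcayley
  simpa [sq, sub_eq_zero, Algebra.smul_def] using hcayley

variable {𝕜 : Type*} [RCLike 𝕜]

/-- The orthogonal projection onto the range of a `2 × 2` matrix `A` of rank one: by
Cayley–Hamilton the square of the singular matrix `A * Aᴴ` is its trace times itself. -/
def rangeProjection (A : Matrix (Fin 2) (Fin 2) 𝕜) : Matrix (Fin 2) (Fin 2) 𝕜 :=
  (A * Aᴴ).trace⁻¹ • (A * Aᴴ)

lemma rangeProjection_ne_zero {A : Matrix (Fin 2) (Fin 2) 𝕜} (hA : A ≠ 0) :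
    rangeProjection A ≠ 0 :=
  smul_ne_zero (inv_ne_zero (trace_mul_conjTranspose_self_eq_zero_iff.not.2 hA))
    (self_mul_conjTranspose_eq_zero.not.2 hA)

lemma isStarProjection_rangeProjection {A : Matrix (Fin 2) (Fin 2) 𝕜} (hA : A.det = 0) :
    IsStarProjection (rangeProjection A) where
  isIdempotentElem := by
    have hdet : (A * Aᴴ).det = 0 := by rw [det_mul, hA, zero_mul]
    rw [IsIdempotentElem, rangeProjection, smul_mul_smul_comm,
      mul_self_eq_trace_smul_of_det_eq_zero hdet, smul_smul]
    congr 1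
    simpa only [inv_inv] using mul_self_mul_inv (A * Aᴴ).trace⁻¹
  isSelfAdjoint := by
    have hherm : (A * Aᴴ)ᴴ = A * Aᴴ := isHermitian_mul_conjTranspose_self A
    rw [IsSelfAdjoint, rangeProjection, star_smul, star_inv₀, star_eq_conjTranspose,
      ← trace_conjTranspose, hherm]

lemma mul_rangeProjection_adjugate {X : Matrix (Fin 2) (Fin 2) 𝕜} (hX : X.det = 0) :
    X * rangeProjection X.adjugate = 0 := by
  rw [rangeProjection, mul_smul_comm, ← mul_assoc, mul_adjugate, hX, zero_smul, zero_mul, smul_zero]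

lemma adjugate_fin_two_ne_zero {R : Type*} [CommRing R] {X : Matrix (Fin 2) (Fin 2) R}
    (hX : X ≠ 0) : X.adjugate ≠ 0 := by
  intro h
  apply hX
  simpa [h] using X.adjugate_adjugate'.symm

variable {E : Type*} [NormedAddCommGroup E] [NormedSpace ℝ E] {U : Set E}

lemma analyticOnNhd_toEuclideanCLM {n : Type*} [Fintype n] [DecidableEq n] {A : E → Matrix n n 𝕜}
    (hA : ∀ i j, AnalyticOnNhd ℝ (fun z ↦ A z i j) U) :
    AnalyticOnNhd ℝ (fun z ↦ (toEuclideanCLM (n := n) (𝕜 := 𝕜) (A z)).restrictScalars ℝ) U := by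
  let L : (n → n → 𝕜) →ₗ[ℝ] EuclideanSpace 𝕜 n →L[ℝ] EuclideanSpace 𝕜 n :=
    { toFun := fun B ↦ (toEuclideanCLM (n := n) (𝕜 := 𝕜) (of B)).restrictScalars ℝ
      map_add' := fun B C ↦ by ext; simp [← of_add_of]
      map_smul' := fun c B ↦ by ext; simp [← smul_of, smul_mulVec] }
  have hA' : AnalyticOnNhd ℝ (fun z i j ↦ A z i j) U := .pi fun i ↦ .pi (hA i)
  exact ContinuousLinearMap.comp_analyticOnNhd (F := n → n → 𝕜)
    (G := EuclideanSpace 𝕜 n →L[ℝ] EuclideanSpace 𝕜 n) L.toContinuousLinearMap hA'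

lemma analyticOnNhd_rangeProjection {A : E → Matrix (Fin 2) (Fin 2) 𝕜}
    (hA : ∀ i j, AnalyticOnNhd ℝ (fun z ↦ A z i j) U) (hA0 : ∀ z ∈ U, A z ≠ 0) (i j : Fin 2) :
    AnalyticOnNhd ℝ (fun z ↦ rangeProjection (A z) i j) U := by
  have hstar (i j : Fin 2) : AnalyticOnNhd ℝ (fun z ↦ star (A z i j)) U :=
    (starL' ℝ : 𝕜 ≃L[ℝ] 𝕜).toContinuousLinearMap.comp_analyticOnNhd (hA i j)
  have hgram (i j : Fin 2) : AnalyticOnNhd ℝ (fun z ↦ (A z * (A z)ᴴ) i j) U := by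
    simp only [mul_apply, conjTranspose_apply]
    exact Finset.univ.analyticOnNhd_fun_sum fun k _ ↦ (hA i k).mul (hstar j k)
  have htrace : AnalyticOnNhd ℝ (fun z ↦ (A z * (A z)ᴴ).trace) U :=
    Finset.univ.analyticOnNhd_fun_sum fun k _ ↦ hgram k k
  exact (htrace.inv fun z hz ↦ trace_mul_conjTranspose_self_eq_zero_iff.not.2 (hA0 z hz)).mul
    (hgram i j)

/-- For `v ≠ 0`, a matrix of determinant one whose conjugate transpose has second column `v`. -/
def slCompletion (v : Fin 2 → 𝕜) : Matrix (Fin 2) (Fin 2) 𝕜 :=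
  !![v 1 / (v ⬝ᵥ star v), -(v 0 / (v ⬝ᵥ star v)); star (v 0), star (v 1)]

lemma det_slCompletion {v : Fin 2 → 𝕜} (hv : v ≠ 0) : (slCompletion v).det = 1 := by
  have hD : v ⬝ᵥ star v ≠ 0 := dotProduct_self_star_eq_zero.not.2 hv
  have hsum : v ⬝ᵥ star v = v 0 * star (v 0) + v 1 * star (v 1) := by
    simp [dotProduct, Fin.sum_univ_two]
  rw [slCompletion, det_fin_two_of]
  field_simp
  rw [hsum]
  ring

lemma slCompletion_mul_mul_conjTranspose_apply_one {X : Matrix (Fin 2) (Fin 2) 𝕜} {v : Fin 2 → 𝕜}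
    (hv : X *ᵥ v = 0) (i : Fin 2) : (slCompletion v * X * (slCompletion v)ᴴ) i 1 = 0 := by
  have hcol : (slCompletion v)ᴴ.col 1 = v := by
    ext j
    fin_cases j <;> simp [slCompletion]
  have hprod : (slCompletion v * X * (slCompletion v)ᴴ).col 1 = 0 := by
    rw [← mulVec_single_one, ← mulVec_mulVec, mulVec_single_one, hcol, ← mulVec_mulVec, hv,
      mulVec_zero]
  exact congr_fun hprod i

lemma analyticOnNhd_slCompletion {v : E → Fin 2 → 𝕜} (hv : AnalyticOnNhd ℝ v U)
    (hv0 : ∀ z ∈ U, v z ≠ 0) (i j : Fin 2) :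
    AnalyticOnNhd ℝ (fun z ↦ slCompletion (v z) i j) U := by
  have hcoord (k : Fin 2) : AnalyticOnNhd ℝ (fun z ↦ v z k) U :=
    (ContinuousLinearMap.proj (R := ℝ) (φ := fun _ : Fin 2 ↦ 𝕜) k).comp_analyticOnNhd hv
  have hstar (k : Fin 2) : AnalyticOnNhd ℝ (fun z ↦ star (v z k)) U :=
    (starL' ℝ : 𝕜 ≃L[ℝ] 𝕜).toContinuousLinearMap.comp_analyticOnNhd (hcoord k)
  have hnorm : AnalyticOnNhd ℝ (fun z ↦ v z ⬝ᵥ star (v z)) U :=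
    Finset.univ.analyticOnNhd_fun_sum fun k _ ↦ (hcoord k).mul (hstar k)
  have hquot (k : Fin 2) : AnalyticOnNhd ℝ (fun z ↦ v z k / (v z ⬝ᵥ star (v z))) U :=
    (hcoord k).div hnorm fun z hz ↦ dotProduct_self_star_eq_zero.not.2 (hv0 z hz)
  fin_cases i <;> fin_cases j
  · exact hquot 1
  · exact (hquot 0).neg
  · exact hstar 0
  · exact hstar 1

lemma analyticOnNhd_adjugate_fin_two {X : E → Matrix (Fin 2) (Fin 2) 𝕜}
    (hX : ∀ i j, AnalyticOnNhd ℝ (fun z ↦ X z i j) U) (i j : Fin 2) :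
    AnalyticOnNhd ℝ (fun z ↦ (X z).adjugate i j) U := by
  simp only [adjugate_fin_two]
  fin_cases i <;> fin_cases j
  · exact hX 1 1
  · exact (hX 0 1).neg
  · exact (hX 1 0).neg
  · exact hX 0 0

lemma exists_analyticOnNhd_mulVec_eq_zero {E : Type*} [NormedAddCommGroup E]
    [InnerProductSpace ℝ E] [FiniteDimensional ℝ E] {U : Set E} (hU : IsOpen U)
    [ContractibleSpace U] {X : E → Matrix (Fin 2) (Fin 2) 𝕜}
    (hX_an : ∀ i j, AnalyticOnNhd ℝ (fun z ↦ X z i j) U) (hX_ne : ∀ z ∈ U, X z ≠ 0)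
    (hX_det : ∀ z ∈ U, (X z).det = 0) :
    ∃ v : E → Fin 2 → 𝕜, AnalyticOnNhd ℝ v U ∧ ∀ z ∈ U, X z *ᵥ v z = 0 ∧ v z ≠ 0 := by
  let T : Matrix (Fin 2) (Fin 2) 𝕜 ≃⋆ₐ[𝕜] _ := toEuclideanCLM
  have hadj_ne : ∀ z ∈ U, (X z).adjugate ≠ 0 := fun z hz ↦ adjugate_fin_two_ne_zero (hX_ne z hz)
  have hproj : ∀ z ∈ U, IsStarProjection (rangeProjection (X z).adjugate) := fun z hz ↦
    isStarProjection_rangeProjection (by simp [det_adjugate, hX_det z hz])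
  have hT : ∀ z ∈ U, IsStarProjection (T (rangeProjection (X z).adjugate)) := fun z hz ↦
    ⟨(hproj z hz).isIdempotentElem.map T, (hproj z hz).isSelfAdjoint.map T⟩
  obtain ⟨v, hv_an, hv⟩ := exists_analyticOnNhd_fixed_ne_zero (C := 1) hU
    (analyticOnNhd_toEuclideanCLM
      (analyticOnNhd_rangeProjection (analyticOnNhd_adjugate_fin_two hX_an) hadj_ne))
    (fun z hz ↦ congr_arg (ContinuousLinearMap.restrictScalars ℝ) (hT z hz).isIdempotentElem)
    (fun z hz h ↦ rangeProjection_ne_zero (hadj_ne z hz)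
      ((map_eq_zero_iff T T.injective).1 (ContinuousLinearMap.ext fun x ↦ DFunLike.congr_fun h x)))
    (fun z hz ↦ (hT z hz).norm_le)
  refine ⟨fun z ↦ (v z).ofLp, ?_, fun z hz ↦ ⟨?_, by simpa using (hv z hz).2⟩⟩
  · exact (PiLp.continuousLinearEquiv 2 ℝ fun _ : Fin 2 ↦ 𝕜).toContinuousLinearMap
      |>.comp_analyticOnNhd hv_an
  · have hfixed : rangeProjection (X z).adjugate *ᵥ (v z).ofLp = (v z).ofLp :=
      congr_arg WithLp.ofLp (hv z hz).1
    change X z *ᵥ (v z).ofLp = 0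
    rw [← hfixed, mulVec_mulVec, mul_rangeProjection_adjugate (hX_det z hz), zero_mulVec]

theorem stmt11_general {E : Type*} [NormedAddCommGroup E] [InnerProductSpace ℝ E]
    [FiniteDimensional ℝ E] {U : Set E} (hU : IsOpen U) [ContractibleSpace U]
    {X : E → Matrix (Fin 2) (Fin 2) 𝕜} (hX_an : ∀ i j, AnalyticOnNhd ℝ (fun z ↦ X z i j) U)
    (hX_ne : ∀ z ∈ U, X z ≠ 0) (hX_det : ∀ z ∈ U, (X z).det = 0) :
    ∃ g : E → Matrix (Fin 2) (Fin 2) 𝕜,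
      (∀ i j, AnalyticOnNhd ℝ (fun z ↦ g z i j) U) ∧
      (∀ z ∈ U, (g z).det = 1) ∧
      ∀ z ∈ U, ∀ i, (g z * X z * (g z)ᴴ) i 1 = 0 := by
  obtain ⟨v, hv_an, hv⟩ := exists_analyticOnNhd_mulVec_eq_zero hU hX_an hX_ne hX_det
  exact ⟨fun z ↦ slCompletion (v z), analyticOnNhd_slCompletion hv_an fun z hz ↦ (hv z hz).2,
    fun z hz ↦ det_slCompletion (hv z hz).2,
    fun z hz ↦ slCompletion_mul_mul_conjTranspose_apply_one (hv z hz).1⟩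

end Matrix

/-- Main step in the proof of Lemma 4.1: a nowhere-vanishing real analytic family of
singular `2×2` complex matrices on a contractible open `U ⊆ ℂ` can be transformed by
a real analytic `SL(2,ℂ)`-valued map `g` so that `g X ḡᵀ` has vanishing second
column. -/
theorem stmt11 (U : Set ℂ) (hUo : IsOpen U) (hUc : ContractibleSpace U)
    (X : ℂ → Matrix (Fin 2) (Fin 2) ℂ)
    (hX_an : ∀ i j, AnalyticOn ℝ (fun z => X z i j) U)
    (hX_ne : ∀ z ∈ U, X z ≠ 0)
    (hX_det : ∀ z ∈ U, (X z).det = 0) :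
    ∃ g : ℂ → Matrix (Fin 2) (Fin 2) ℂ,
      (∀ i j, AnalyticOn ℝ (fun z => g z i j) U) ∧
      (∀ z ∈ U, (g z).det = 1) ∧
      (∀ z ∈ U, ∀ i, (g z * X z * (g z)ᴴ) i 1 = 0) := by
  simp only [hUo.analyticOn_iff_analyticOnNhd] at hX_an ⊢
  exact stmt11_general hUo hX_an hX_ne hX_det
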